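/- With the setup of ≤_O: the poset (W(I,J,K), ≤_O) is graded by the length function; that is, whenever w covers w' in the order ≤_O, one has ℓ(w') = ℓ(w) − 1. -/

import Mathlib

section BruhatSetup

variable {B : Type*} {W : Type*} [Group W] {M : CoxeterMatrix B}

/-- Strong Bruhat order: `u ≤ v` iff every reduced word for `v` has a sublist
that is a reduced word for `u`. -/
def BruhatLE (cs : CoxeterSystem M W) (u v : W) : Prop :=
  ∀ ω : List B, cs.IsReduced ω → cs.wordProd ω = v →
    ∃ ω' : List B, List.Sublist ω' ω ∧ cs.IsReduced ω' ∧ cs.wordProd ω' = u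

/-- Strict strong Bruhat order. -/
def BruhatLT (cs : CoxeterSystem M W) (u v : W) : Prop :=
  BruhatLE cs u v ∧ u ≠ v

/-- The standard parabolic subgroup `W_L` generated by the simple reflections in `L`. -/
def parab (cs : CoxeterSystem M W) (L : Set B) : Subgroup W :=
  Subgroup.closure (cs.simple '' L)

/-- The set `W^L` of minimal length coset representatives for `W / W_L`. -/
def minReps (cs : CoxeterSystem M W) (L : Set B) : Set W :=
  {w : W | ∀ i ∈ L, cs.length w < cs.length (w * cs.simple i)}

/-- Right weak order: `v ≤_R w` iff `ℓ(w) = ℓ(w v⁻¹) + ℓ(v)`. -/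
def leR (cs : CoxeterSystem M W) (v w : W) : Prop :=
  cs.length w = cs.length (w * v⁻¹) + cs.length v

/-- The setup of the order `≤_O`: `I`, `J`, `K` are pairwise disjoint and pairwise
disconnected subsets of the simple system (so that `W_{I∪J∪K} = W_I × W_J × W_K`),
and `σ : x ↦ x*` restricts to an isomorphism of Coxeter groups `W_I → W_J`
(a bijective group homomorphism sending simple reflections to simple reflections). -/
structure GoodSetup (cs : CoxeterSystem M W) (I J K : Set B) (σ : W → W) : Prop where
  disjIJ : Disjoint I J
  disjIK : Disjoint I K
  disjJK : Disjoint J K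
  commIJ : ∀ i ∈ I, ∀ j ∈ J, Commute (cs.simple i) (cs.simple j)
  commIK : ∀ i ∈ I, ∀ k ∈ K, Commute (cs.simple i) (cs.simple k)
  commJK : ∀ j ∈ J, ∀ k ∈ K, Commute (cs.simple j) (cs.simple k)
  directProd : ∀ x ∈ parab cs I, ∀ y ∈ parab cs J, ∀ z ∈ parab cs K,
    x * y * z = 1 → x = 1 ∧ y = 1 ∧ z = 1
  mulSigma : ∀ x ∈ parab cs I, ∀ y ∈ parab cs I, σ (x * y) = σ x * σ y
  bijSigma : Set.BijOn σ (parab cs I : Set W) (parab cs J : Set W)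
  simpleSigma : ∀ i ∈ I, ∃ j ∈ J, σ (cs.simple i) = cs.simple j

/-- Membership in the coset `[w] = w · W_K · W_{I,J}` where `W_{I,J} = {x x* : x ∈ W_I}`. -/
def inCoset (cs : CoxeterSystem M W) (I K : Set B) (σ : W → W) (w u : W) : Prop :=
  ∃ a ∈ parab cs K, ∃ x ∈ parab cs I, u = w * a * (x * σ x)

/-- The relation `≤_O`: `w' ≤_O w` iff some `u ∈ [w']` satisfies `u ≤ w` in Bruhat order. -/
def leO (cs : CoxeterSystem M W) (I K : Set B) (σ : W → W) (w' w : W) : Prop :=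
  ∃ u, inCoset cs I K σ w' u ∧ BruhatLE cs u w

/-- The strict relation associated to `≤_O`. -/
def ltO (cs : CoxeterSystem M W) (I K : Set B) (σ : W → W) (w' w : W) : Prop :=
  leO cs I K σ w' w ∧ w' ≠ w

/-- `Min(w)`: the elements of the coset `[w]` of length `ℓ(w)`. -/
def MinC (cs : CoxeterSystem M W) (I K : Set B) (σ : W → W) (w : W) : Set W :=
  {u : W | inCoset cs I K σ w u ∧ cs.length u = cs.length w}

/-- The set `M` of all elements having minimal length in their coset mod `W_K W_{I,J}`. -/
def Mset (cs : CoxeterSystem M W) (I J K : Set B) (σ : W → W) : Set W :=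
  {u : W | ∃ w ∈ minReps cs (J ∪ K), u ∈ MinC cs I K σ w}

/-!
The relation `≤_O` is an order on the cosets of the subgroup `H = W_K W_{I,J}`. Every coset
contains exactly one element `c` of `W^{J ∪ K}`, and every element of the coset dominates modulo
`H` all that `c` dominates, so comparing cosets amounts to comparing with the representatives `c`.
For a simple reflection `s`, either `s c` is again in `W^{J ∪ K}` or `s c = c t` with `t` a simple
reflection from `J ∪ K`. This gives the order on cosets the lifting property of the Bruhat order.
To find a coset strictly between `a < b` of lengths differing by at least two, take `s` with `s b`
shorter than `b`: if `a ≤ s b`, then `s b` itself is between; otherwise `s a < s b`, and from a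
coset between these two, found by induction on the length of `b`, lifting gives one between `a`
and `b`.
-/

section StrongExchange

variable (cs : CoxeterSystem M W)

open Classical in
/-- The permutation `(t, ε) ↦ (sᵢ t sᵢ, ε + [t = sᵢ])` of `W × ℤ/2`. Restricted to reflections `t`
it is the geometric action on roots, the sign of a root being recorded in `ℤ/2`. -/
noncomputable def reflectionFlip (i : B) : Function.End (W × ZMod 2) :=
  fun p => (cs.simple i * p.1 * cs.simple i, p.2 + if p.1 = cs.simple i then 1 else 0)

open Classical in
theorem prod_map_reflectionFlip_apply (ω : List B) (t : W) (ε : ZMod 2) :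
    (ω.map (reflectionFlip cs)).prod (t, ε) =
      (cs.wordProd ω * t * (cs.wordProd ω)⁻¹, ε + ((cs.rightInvSeq ω).count t : ℕ)) := by
  induction ω with
  | nil => simp; rfl
  | cons i ω ih =>
    have conj_eq_simple : cs.wordProd ω * t * (cs.wordProd ω)⁻¹ = cs.simple i ↔
        (cs.wordProd ω)⁻¹ * cs.simple i * cs.wordProd ω = t := by
      rw [mul_inv_eq_iff_eq_mul, mul_assoc, inv_mul_eq_iff_eq_mul, eq_comm]
    change reflectionFlip cs i ((ω.map (reflectionFlip cs)).prod (t, ε)) = _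
    rw [ih]
    refine Prod.ext ?_ ?_
    · simp [reflectionFlip, cs.wordProd_cons, mul_assoc]
    · simp only [reflectionFlip, conj_eq_simple, CoxeterSystem.rightInvSeq, List.count_cons,
        beq_iff_eq]
      push_cast
      rw [add_assoc]

theorem prod_map_reverse_alternatingWord {G : Type*} [Monoid G] (f : B → G) (i j : B) (m : ℕ) :
    ((CoxeterSystem.alternatingWord j i (2 * m)).reverse.map f).prod = (f i * f j) ^ m := by
  induction m with
  | zero => simp [CoxeterSystem.alternatingWord]
  | succ m ih =>
    rw [show 2 * (m + 1) = 2 * m + 1 + 1 by ring, CoxeterSystem.alternatingWord_succ',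
      CoxeterSystem.alternatingWord_succ', pow_succ, ← ih]
    simp

open Classical in
theorem even_count_leftInvSeq_alternatingWord (i j : B) (t : W) :
    Even ((cs.leftInvSeq (CoxeterSystem.alternatingWord j i (2 * M i j))).count t) := by
  set l := cs.leftInvSeq (CoxeterSystem.alternatingWord j i (2 * M i j)) with hl
  have length_l : l.length = 2 * M i j := by simp [hl]
  have take_eq_drop : l.take (M i j) = l.drop (M i j) := by
    refine List.ext_getElem (by simp [length_l]; omega) fun k hk _ => ?_
    have hkM : k < M i j := by simp at hk; omega
    have odd_div (n : ℕ) : (2 * n + 1) / 2 = n := by omega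
    simp only [List.getElem_take, List.getElem_drop, hl]
    rw [cs.getElem_leftInvSeq_alternatingWord _ _ _ _ (by omega),
      cs.getElem_leftInvSeq_alternatingWord _ _ _ _ (by omega),
      cs.prod_alternatingWord_eq_mul_pow, cs.prod_alternatingWord_eq_mul_pow, odd_div, odd_div,
      pow_add, cs.simple_mul_simple_pow, one_mul]
    simp
  rw [← List.take_append_drop (M i j) l, List.count_append, take_eq_drop]
  exact Even.add_self _

theorem isLiftable_reflectionFlip : M.IsLiftable (reflectionFlip cs) := by
  classical
  intro i j
  funext ⟨t, ε⟩
  obtain ⟨n, hn⟩ := even_count_leftInvSeq_alternatingWord cs i j t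
  have wordProd_eq_one : cs.wordProd (CoxeterSystem.alternatingWord j i (2 * M i j)) = 1 := by
    rw [cs.prod_alternatingWord_eq_mul_pow]
    simp [M.symmetric i j]
  rw [← prod_map_reverse_alternatingWord, prod_map_reflectionFlip_apply, cs.rightInvSeq_reverse,
    List.count_reverse, hn, cs.wordProd_reverse, wordProd_eq_one]
  push_cast
  rw [CharTwo.add_self_eq_zero]
  simp; rfl

/-- The action of `W` on `W × ℤ/2` extending `reflectionFlip`. -/
noncomputable def reflectionRep : W →* Function.End (W × ZMod 2) :=
  cs.lift ⟨reflectionFlip cs, isLiftable_reflectionFlip cs⟩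

open Classical in
theorem reflectionRep_wordProd_apply (ω : List B) (t : W) (ε : ZMod 2) :
    reflectionRep cs (cs.wordProd ω) (t, ε) =
      (cs.wordProd ω * t * (cs.wordProd ω)⁻¹, ε + ((cs.rightInvSeq ω).count t : ℕ)) := by
  have map_simple : ⇑(reflectionRep cs) ∘ cs.simple = reflectionFlip cs :=
    funext fun i => cs.lift_apply_simple (isLiftable_reflectionFlip cs) i
  rw [← prod_map_reflectionFlip_apply, CoxeterSystem.wordProd, map_list_prod, List.map_map,
    map_simple]

/-- The parity of the number of occurrences of `t` in the right inversion sequence of a word for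
`w`; it does not depend on the word, and is `1` exactly at the right inversions of `w`. -/
noncomputable def inversionParity (w t : W) : ZMod 2 := (reflectionRep cs w (t, 0)).2

open Classical in
theorem inversionParity_wordProd (ω : List B) (t : W) :
    inversionParity cs (cs.wordProd ω) t = ((cs.rightInvSeq ω).count t : ℕ) := by
  simp [inversionParity, reflectionRep_wordProd_apply]

theorem reflectionRep_apply (w t : W) (ε : ZMod 2) :
    reflectionRep cs w (t, ε) = (w * t * w⁻¹, ε + inversionParity cs w t) := by
  classical
  obtain ⟨ω, rfl⟩ := cs.wordProd_surjective w
  rw [reflectionRep_wordProd_apply, inversionParity_wordProd]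

theorem inversionParity_mul (v w t : W) :
    inversionParity cs (v * w) t =
      inversionParity cs w t + inversionParity cs v (w * t * w⁻¹) := by
  have hvw : reflectionRep cs (v * w) (t, 0) = reflectionRep cs v (reflectionRep cs w (t, 0)) := by
    rw [map_mul]; rfl
  rw [inversionParity, hvw, reflectionRep_apply, reflectionRep_apply, zero_add]

theorem inversionParity_simple_self (i : B) :
    inversionParity cs (cs.simple i) (cs.simple i) = 1 := by
  classical
  rw [← cs.wordProd_singleton, inversionParity_wordProd]
  simp

theorem inversionParity_self {t : W} (ht : cs.IsReflection t) : inversionParity cs t t = 1 := by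
  obtain ⟨x, i, rfl⟩ := ht
  have parity_one : inversionParity cs (x * x⁻¹) (x * cs.simple i * x⁻¹) = 0 := by
    rw [mul_inv_cancel, inversionParity, map_one]; rfl
  have conj_inv : x⁻¹ * (x * cs.simple i * x⁻¹) * x⁻¹⁻¹ = cs.simple i := by group
  have conj_simple : cs.simple i * cs.simple i * (cs.simple i)⁻¹ = cs.simple i := by group
  rw [inversionParity_mul, conj_inv] at parity_one
  rw [inversionParity_mul, conj_inv, inversionParity_mul, conj_simple,
    inversionParity_simple_self, add_left_comm, parity_one, add_zero]

theorem mem_rightInvSeq_of_length_mul_lt (ω : List B) {t : W} (ht : cs.IsReflection t)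
    (hlt : cs.length (cs.wordProd ω * t) < cs.length (cs.wordProd ω)) :
    t ∈ cs.rightInvSeq ω := by
  classical
  have mem_of_parity_ne (ω : List B) (hω : inversionParity cs (cs.wordProd ω) t ≠ 0) :
      t ∈ cs.rightInvSeq ω := by
    contrapose! hω
    rw [inversionParity_wordProd, List.count_eq_zero_of_not_mem hω, Nat.cast_zero]
  refine mem_of_parity_ne ω fun parity_eq_zero => ?_
  have parity_mul : inversionParity cs (cs.wordProd ω * t) t = 1 := by
    rw [inversionParity_mul, inversionParity_self cs ht, mul_inv_cancel_right, parity_eq_zero,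
      add_zero]
  obtain ⟨ω', reduced, hω'⟩ := cs.exists_isReduced (cs.wordProd ω * t)
  rw [hω'] at parity_mul
  have inversion := cs.isRightInversion_of_mem_rightInvSeq reduced
    (mem_of_parity_ne ω' (by rw [parity_mul]; exact one_ne_zero))
  have lt_mul := inversion.2
  rw [← hω', mul_assoc, ht.mul_self, mul_one] at lt_mul
  exact lt_asymm hlt lt_mul

theorem exists_wordProd_mul_eq_wordProd_eraseIdx (ω : List B) {t : W} (ht : cs.IsReflection t)
    (hlt : cs.length (cs.wordProd ω * t) < cs.length (cs.wordProd ω)) :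
    ∃ k < ω.length, cs.wordProd ω * t = cs.wordProd (ω.eraseIdx k) := by
  obtain ⟨k, hk, hkt⟩ := List.getElem_of_mem (mem_rightInvSeq_of_length_mul_lt cs ω ht hlt)
  refine ⟨k, by simpa using hk, ?_⟩
  rw [← cs.wordProd_mul_getD_rightInvSeq, List.getD_eq_getElem _ _ hk, hkt]

theorem exists_isReduced_sublist (ω : List B) :
    ∃ ω', List.Sublist ω' ω ∧ cs.IsReduced ω' ∧ cs.wordProd ω' = cs.wordProd ω := by
  induction ω with
  | nil => exact ⟨[], List.Sublist.refl _, by simp [CoxeterSystem.IsReduced], rfl⟩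
  | cons i ω ih =>
    obtain ⟨ω', sub, reduced, prod_eq⟩ := ih
    have length_eq := reduced.eq
    rw [cs.wordProd_cons, ← prod_eq]
    rcases cs.length_simple_mul (cs.wordProd ω') i with h | h
    · refine ⟨i :: ω', sub.cons_cons i, ?_, cs.wordProd_cons i ω'⟩
      rw [CoxeterSystem.IsReduced, cs.wordProd_cons, h, length_eq, List.length_cons]
    · have mul_conj : cs.wordProd ω' * ((cs.wordProd ω')⁻¹ * cs.simple i * cs.wordProd ω') =
          cs.simple i * cs.wordProd ω' := by group
      have conj_refl := (cs.isReflection_simple i).conj (cs.wordProd ω')⁻¹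
      rw [inv_inv] at conj_refl
      obtain ⟨k, hk, erase_eq⟩ := exists_wordProd_mul_eq_wordProd_eraseIdx cs ω' conj_refl
        (by rw [mul_conj]; omega)
      rw [mul_conj] at erase_eq
      refine ⟨ω'.eraseIdx k, ((List.eraseIdx_sublist _ _).trans sub).cons i, ?_, erase_eq.symm⟩
      rw [CoxeterSystem.IsReduced, ← erase_eq, List.length_eraseIdx_of_lt hk]
      omega

end StrongExchange

section Bruhat

/-- The generating relation `x < xt`, `t` a reflection with `ℓ(x) < ℓ(xt)`, of the Bruhat order. -/
def BruhatStep (cs : CoxeterSystem M W) (x y : W) : Prop :=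
  cs.IsReflection (x⁻¹ * y) ∧ cs.length x < cs.length y

/-- The Bruhat order as the reflexive transitive closure of `BruhatStep`; it agrees with the subword
order `BruhatLE` by `bruhatLE_iff_bruhatChain`. -/
def BruhatChain (cs : CoxeterSystem M W) : W → W → Prop := Relation.ReflTransGen (BruhatStep cs)

variable {cs : CoxeterSystem M W} {x y : W}

theorem bruhatStep_mul_simple {i : B} (hlt : cs.length x < cs.length (x * cs.simple i)) :
    BruhatStep cs x (x * cs.simple i) :=
  ⟨by rw [inv_mul_cancel_left]; exact cs.isReflection_simple i, hlt⟩

theorem BruhatStep.inv (h : BruhatStep cs x y) : BruhatStep cs x⁻¹ y⁻¹ := by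
  refine ⟨?_, by simpa only [cs.length_inv] using h.2⟩
  have conj_eq : x * (x⁻¹ * y)⁻¹ * x⁻¹ = x⁻¹⁻¹ * y⁻¹ := by group
  rw [← conj_eq]
  exact h.1.isReflection_inv.conj x

theorem BruhatStep.simple_mul_or (h : BruhatStep cs x y) (i : B) :
    BruhatStep cs (cs.simple i * x) (cs.simple i * y) ∨ cs.simple i * y = x := by
  obtain ⟨ht, hlt⟩ := h
  by_cases hlt' : cs.length (cs.simple i * x) < cs.length (cs.simple i * y)
  · exact Or.inl ⟨by simpa [mul_assoc] using ht, hlt'⟩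
  right
  have y_mul : y * (x⁻¹ * y) = x := by
    rw [← ht.inv]; group
  obtain ⟨ω, reduced, hω⟩ := cs.exists_isReduced (cs.simple i * y)
  have wordProd_eq : cs.wordProd (i :: ω) = y := by rw [cs.wordProd_cons, ← hω]; simp
  obtain ⟨k, hk, erase_eq⟩ := exists_wordProd_mul_eq_wordProd_eraseIdx cs (i :: ω) ht
    (by rw [wordProd_eq, y_mul]; exact hlt)
  rw [wordProd_eq, y_mul] at erase_eq
  cases k with
  | zero => rw [hω, erase_eq, List.eraseIdx_cons_zero]
  | succ k =>
    have simple_mul_eq : cs.simple i * x = cs.wordProd (ω.eraseIdx k) := by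
      rw [erase_eq, List.eraseIdx_cons_succ, cs.wordProd_cons, cs.simple_mul_simple_cancel_left]
    have length_le := cs.length_wordProd_le (ω.eraseIdx k)
    have length_eq := reduced.eq
    rw [List.length_cons] at hk
    rw [← simple_mul_eq, List.length_eraseIdx_of_lt (by omega)] at length_le
    rw [← hω] at length_eq
    omega

theorem BruhatStep.mul_simple_or (h : BruhatStep cs x y) (i : B) :
    BruhatStep cs (x * cs.simple i) (y * cs.simple i) ∨ y * cs.simple i = x := by
  refine (h.inv.simple_mul_or i).imp (fun h' => ?_) fun h' => ?_
  · simpa using h'.inv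
  · simpa using congrArg (·⁻¹) h'

namespace BruhatChain

theorem le_mul_simple {i : B} (hlt : cs.length x < cs.length (x * cs.simple i)) :
    BruhatChain cs x (x * cs.simple i) :=
  Relation.ReflTransGen.single (bruhatStep_mul_simple hlt)

theorem mul_simple_le {i : B} (hlt : cs.length (x * cs.simple i) < cs.length x) :
    BruhatChain cs (x * cs.simple i) x := by
  simpa using le_mul_simple (cs := cs) (x := x * cs.simple i) (i := i) (by simpa using hlt)

theorem inv (h : BruhatChain cs x y) : BruhatChain cs x⁻¹ y⁻¹ := by
  induction h with
  | refl => exact Relation.ReflTransGen.refl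
  | tail _ step ih => exact ih.tail step.inv

theorem le_simple_mul {i : B} (hlt : cs.length x < cs.length (cs.simple i * x)) :
    BruhatChain cs x (cs.simple i * x) := by
  have hlt_inv : cs.length x⁻¹ < cs.length (x⁻¹ * cs.simple i) := by
    rw [← cs.inv_simple i, ← mul_inv_rev, cs.length_inv, cs.length_inv]
    exact hlt
  simpa using (le_mul_simple hlt_inv).inv

theorem simple_mul_le {i : B} (hlt : cs.length (cs.simple i * x) < cs.length x) :
    BruhatChain cs (cs.simple i * x) x := by
  simpa using le_simple_mul (cs := cs) (x := cs.simple i * x) (i := i) (by simpa using hlt)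

theorem length_le (h : BruhatChain cs x y) : cs.length x ≤ cs.length y := by
  induction h with
  | refl => exact le_rfl
  | tail _ step ih => exact ih.trans step.2.le

theorem eq_of_length_le (h : BruhatChain cs x y) (hle : cs.length y ≤ cs.length x) : x = y := by
  rcases Relation.ReflTransGen.cases_tail h with h | ⟨z, hxz, step⟩
  · exact h.symm
  · exact absurd (hle.trans (length_le hxz)) step.2.not_ge

theorem simple_mul_le_or_simple_mul_le_simple_mul (h : BruhatChain cs x y) (i : B) :
    BruhatChain cs (cs.simple i * x) y ∨ BruhatChain cs (cs.simple i * x) (cs.simple i * y) := by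
  induction h with
  | refl => exact Or.inr Relation.ReflTransGen.refl
  | @tail z y _ step ih =>
    rcases ih with ih | ih
    · exact Or.inl (ih.tail step)
    · rcases step.simple_mul_or i with step' | eq
      · exact Or.inr (ih.tail step')
      · left
        rwa [← eq, cs.simple_mul_simple_cancel_left] at ih

theorem le_simple_mul_or_simple_mul_le_simple_mul (h : BruhatChain cs x y) (i : B) :
    BruhatChain cs x (cs.simple i * y) ∨ BruhatChain cs (cs.simple i * x) (cs.simple i * y) := by
  induction h with
  | refl => exact Or.inr Relation.ReflTransGen.refl
  | @tail z y hxz step ih =>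
    rcases step.simple_mul_or i with step' | eq
    · exact ih.imp (·.tail step') (·.tail step')
    · exact Or.inl (by rwa [eq])

theorem mul_simple_le_or_mul_simple_le_mul_simple (h : BruhatChain cs x y) (i : B) :
    BruhatChain cs (x * cs.simple i) y ∨ BruhatChain cs (x * cs.simple i) (y * cs.simple i) :=
  (h.inv.simple_mul_le_or_simple_mul_le_simple_mul i).imp
    (by simpa using ·.inv) (by simpa using ·.inv)

theorem le_mul_simple_or_mul_simple_le_mul_simple (h : BruhatChain cs x y) (i : B) :
    BruhatChain cs x (y * cs.simple i) ∨ BruhatChain cs (x * cs.simple i) (y * cs.simple i) :=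
  (h.inv.le_simple_mul_or_simple_mul_le_simple_mul i).imp
    (by simpa using ·.inv) (by simpa using ·.inv)

theorem wordProd_le_wordProd_cons {i : B} {ω : List B} (hr : cs.IsReduced (i :: ω)) :
    BruhatChain cs (cs.wordProd ω) (cs.wordProd (i :: ω)) := by
  have tail_reduced : cs.IsReduced ω := hr.drop 1
  have length_lt : cs.length (cs.wordProd ω) < cs.length (cs.wordProd (i :: ω)) := by
    rw [hr.eq, tail_reduced.eq, List.length_cons]
    exact Nat.lt_succ_self _
  rw [cs.wordProd_cons] at length_lt ⊢
  exact le_simple_mul length_lt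

theorem of_sublist {ω ω' : List B} (hs : List.Sublist ω' ω) (hr : cs.IsReduced ω) :
    BruhatChain cs (cs.wordProd ω') (cs.wordProd ω) := by
  induction hs with
  | slnil => exact Relation.ReflTransGen.refl
  | cons i _ ih => exact (ih (hr.drop 1)).trans (wordProd_le_wordProd_cons hr)
  | cons_cons i _ ih =>
    have le_cons := wordProd_le_wordProd_cons hr
    simp only [cs.wordProd_cons] at le_cons ⊢
    exact ((ih (hr.drop 1)).simple_mul_le_or_simple_mul_le_simple_mul i).elim (·.trans le_cons) id

theorem exists_sublist {u w : W} (h : BruhatChain cs u w) (ω : List B) (hω : cs.wordProd ω = w) :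
    ∃ ω', List.Sublist ω' ω ∧ cs.wordProd ω' = u := by
  induction h using Relation.ReflTransGen.head_induction_on with
  | refl => exact ⟨ω, List.Sublist.refl _, hω⟩
  | @head x y step _ ih =>
    obtain ⟨ω', sub, prod_eq⟩ := ih
    obtain ⟨ht, hlt⟩ := step
    have y_mul : y * (x⁻¹ * y) = x := by
      rw [← ht.inv]; group
    obtain ⟨k, _, erase_eq⟩ := exists_wordProd_mul_eq_wordProd_eraseIdx cs ω' ht
      (by rwa [prod_eq, y_mul])
    exact ⟨ω'.eraseIdx k, (List.eraseIdx_sublist _ _).trans sub, by rw [← erase_eq, prod_eq, y_mul]⟩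

end BruhatChain

theorem bruhatLE_iff_bruhatChain {u w : W} : BruhatLE cs u w ↔ BruhatChain cs u w := by
  constructor
  · intro h
    obtain ⟨ω, reduced, rfl⟩ := cs.exists_isReduced w
    obtain ⟨ω', sub, _, rfl⟩ := h ω reduced rfl
    exact BruhatChain.of_sublist sub reduced
  · intro h ω _ hω
    obtain ⟨ω', sub, rfl⟩ := h.exists_sublist ω hω
    obtain ⟨ω'', sub', reduced, prod_eq⟩ := exists_isReduced_sublist cs ω'
    exact ⟨ω'', sub'.trans sub, reduced, prod_eq⟩

end Bruhat

section MinimalRepresentatives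

variable {cs : CoxeterSystem M W} {L : Set B} {c z : W}

theorem simple_mem_parab {i : B} (hi : i ∈ L) : cs.simple i ∈ parab cs L :=
  Subgroup.subset_closure ⟨i, hi, rfl⟩

theorem parab_mono {L' : Set B} (hL : L ⊆ L') : parab cs L ≤ parab cs L' :=
  Subgroup.closure_mono (Set.image_mono hL)

theorem parab_induction_right {p : W → Prop} (one : p 1)
    (mul_simple : ∀ z ∈ parab cs L, ∀ i ∈ L, p z → p (z * cs.simple i)) (hz : z ∈ parab cs L) :
    p z := by
  refine Subgroup.closure_induction_right (p := fun z _ => p z) one ?_ ?_ hz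
  · rintro z hz _ ⟨i, hi, rfl⟩
    exact mul_simple z hz i hi
  · rintro z hz _ ⟨i, hi, rfl⟩
    rw [cs.inv_simple]
    exact mul_simple z hz i hi

theorem commute_of_mem_parab {L' : Set B}
    (hcomm : ∀ i ∈ L, ∀ j ∈ L', Commute (cs.simple i) (cs.simple j)) {x y : W}
    (hx : x ∈ parab cs L) (hy : y ∈ parab cs L') : Commute x y := by
  refine parab_induction_right (p := fun y => Commute x y) (Commute.one_right x)
    (fun y _ j hj ih => ih.mul_right ?_) hy
  exact parab_induction_right (p := fun x => Commute x (cs.simple j)) (Commute.one_left _)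
    (fun x _ i hi ih => ih.mul_left (hcomm i hi j hj)) hx

theorem one_mem_minReps : (1 : W) ∈ minReps cs L := fun i _ => by simp

theorem bruhatChain_mul_of_mem_minReps (hc : c ∈ minReps cs L) (hz : z ∈ parab cs L) :
    BruhatChain cs c (c * z) := by
  refine parab_induction_right (p := fun z => BruhatChain cs c (c * z))
    (by rw [mul_one]; exact Relation.ReflTransGen.refl) (fun z _ i hi ih => ?_) hz
  rw [← mul_assoc]
  exact (ih.le_mul_simple_or_mul_simple_le_mul_simple i).elim id
    (BruhatChain.le_mul_simple (hc i hi)).trans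

theorem eq_one_of_mul_mem_minReps (hc : c ∈ minReps cs L) (hz : z ∈ parab cs L)
    (hcz : c * z ∈ minReps cs L) : z = 1 := by
  have le := bruhatChain_mul_of_mem_minReps hc hz
  have ge := bruhatChain_mul_of_mem_minReps hcz (inv_mem hz)
  rw [mul_inv_cancel_right] at ge
  exact mul_eq_left.1 (le.eq_of_length_le ge.length_le).symm

theorem exists_eq_mul_mem_minReps (cs : CoxeterSystem M W) (L : Set B) (y : W) :
    ∃ c ∈ minReps cs L, ∃ z ∈ parab cs L,
      y = c * z ∧ cs.length y = cs.length c + cs.length z := by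
  induction hn : cs.length y using Nat.strong_induction_on generalizing y with
  | _ n ih =>
    by_cases hy : y ∈ minReps cs L
    · exact ⟨y, hy, 1, one_mem _, (mul_one y).symm, by simp [hn]⟩
    · obtain ⟨i, hi, hle⟩ : ∃ i ∈ L, cs.length (y * cs.simple i) ≤ cs.length y := by
        simpa [minReps] using hy
      have hlt := lt_of_le_of_ne hle (cs.length_mul_simple_ne y i)
      obtain ⟨c, hc, z, hz, y_eq, length_eq⟩ := ih _ (hn ▸ hlt) (y * cs.simple i) rfl
      have y_eq' : y = c * (z * cs.simple i) := by
        rw [← mul_assoc, ← y_eq, cs.simple_mul_simple_cancel_right]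
      refine ⟨c, hc, z * cs.simple i, mul_mem hz (simple_mem_parab hi), y_eq', ?_⟩
      have upper := cs.length_mul_le c (z * cs.simple i)
      rw [← y_eq'] at upper
      have length_step := cs.length_mul_simple z i
      omega

theorem length_mul_of_mem_minReps (hc : c ∈ minReps cs L) (hz : z ∈ parab cs L) :
    cs.length (c * z) = cs.length c + cs.length z := by
  obtain ⟨c', hc', z', hz', eq, length_eq⟩ := exists_eq_mul_mem_minReps cs L (c * z)
  have c'_eq : c' = c * (z * z'⁻¹) := by rw [← mul_assoc, eq, mul_inv_cancel_right]
  have z_eq := eq_one_of_mul_mem_minReps hc (mul_mem hz (inv_mem hz')) (c'_eq ▸ hc')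
  rw [length_eq, c'_eq, z_eq, mul_one, mul_inv_eq_one.1 z_eq]

theorem exists_simple_eq_of_simple_mem_parab {j : B} (hj : cs.simple j ∈ parab cs L) :
    ∃ l ∈ L, cs.simple j = cs.simple l := by
  have not_minRep : cs.simple j ∉ minReps cs L := fun hmin => by
    have eq_one := eq_one_of_mul_mem_minReps one_mem_minReps hj (by rwa [one_mul])
    simpa [eq_one] using cs.length_simple j
  obtain ⟨l, hl, hle⟩ : ∃ l ∈ L,
      cs.length (cs.simple j * cs.simple l) ≤ cs.length (cs.simple j) := by
    simpa [minReps] using not_minRep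
  have hne := cs.length_mul_simple_ne (cs.simple j) l
  rw [cs.length_simple] at hle hne
  have mul_eq_one :=
    cs.length_eq_zero_iff.1 (show cs.length (cs.simple j * cs.simple l) = 0 by omega)
  exact ⟨l, hl, by rw [← cs.inv_simple l]; exact eq_inv_of_mul_eq_one_left mul_eq_one⟩

theorem simple_mul_mem_minReps_or (hc : c ∈ minReps cs L) (i : B) :
    cs.simple i * c ∈ minReps cs L ∨ ∃ l ∈ L, cs.simple i * c = c * cs.simple l := by
  by_contra! hcon
  refine hcon.1 fun l hl => ?_
  rcases (bruhatStep_mul_simple (hc l hl)).simple_mul_or i with step | eq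
  · simpa [mul_assoc] using step.2
  · refine absurd ?_ (hcon.2 l hl)
    nth_rw 1 [← eq]
    simp

theorem mul_simple_mem_minReps (hc : c ∈ minReps cs L) {i : B}
    (hcomm : ∀ l ∈ L, Commute (cs.simple i) (cs.simple l))
    (hne : ∀ l ∈ L, cs.simple i ≠ cs.simple l) : c * cs.simple i ∈ minReps cs L := by
  intro l hl
  rcases (bruhatStep_mul_simple (hc l hl)).mul_simple_or i with step | eq
  · rw [mul_assoc, (hcomm l hl).eq, ← mul_assoc]
    exact step.2
  · refine absurd ?_ (hne l hl)
    rw [mul_assoc, mul_eq_left] at eq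
    rw [← cs.inv_simple l]
    exact eq_inv_of_mul_eq_one_right eq

end MinimalRepresentatives

section Lifting

/-- A `W`-set `X` with a transitive relation `le` and a height function `ht` having the lifting
property of the Bruhat order with respect to the simple reflections. -/
structure HasLifting (cs : CoxeterSystem M W) {X : Type*} [MulAction W X] (le : X → X → Prop)
    (ht : X → ℕ) : Prop where
  trans : ∀ {x y z}, le x y → le y z → le x z
  ht_smul_le : ∀ i x, ht (cs.simple i • x) ≤ ht x + 1
  exists_ht_smul_lt : ∀ x, ht x ≠ 0 → ∃ i, ht (cs.simple i • x) < ht x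
  le_smul : ∀ {i x}, ht x ≤ ht (cs.simple i • x) → le x (cs.simple i • x)
  le_smul_or : ∀ i {x y}, le x y → le x (cs.simple i • y) ∨ le (cs.simple i • x) (cs.simple i • y)
  smul_le : ∀ {i x y}, le x y → ht (cs.simple i • y) ≤ ht y → le (cs.simple i • x) y

namespace HasLifting

variable {cs : CoxeterSystem M W} {X : Type*} [MulAction W X] {le : X → X → Prop} {ht : X → ℕ}
  {i : B} {x y : X}

theorem simple_smul_smul (i : B) (x : X) : cs.simple i • cs.simple i • x = x := by
  rw [smul_smul, cs.simple_mul_simple_self, one_smul]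

theorem smul_le_self (h : HasLifting cs le ht) (hle : ht (cs.simple i • x) ≤ ht x) :
    le (cs.simple i • x) x := by
  simpa only [simple_smul_smul] using
    h.le_smul (i := i) (x := cs.simple i • x) (by rwa [simple_smul_smul])

theorem le_smul_of_le (h : HasLifting cs le ht) (hxy : le x y) (hx : ht x ≤ ht (cs.simple i • x)) :
    le x (cs.simple i • y) :=
  (h.le_smul_or i hxy).elim id (h.trans (h.le_smul hx))

theorem ht_le_ht_smul (h : HasLifting cs le ht) (i : B) (x : X) :
    ht x ≤ ht (cs.simple i • x) + 1 := by
  simpa only [simple_smul_smul] using h.ht_smul_le i (cs.simple i • x)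

theorem exists_between (h : HasLifting cs le ht) (hxy : le x y) (hgap : ht x + 2 ≤ ht y) :
    ∃ z, le x z ∧ le z y ∧ ht x < ht z ∧ ht z < ht y := by
  induction hn : ht y using Nat.strong_induction_on generalizing x y with
  | _ n ih =>
    subst hn
    obtain ⟨i, hy⟩ := h.exists_ht_smul_lt y (by omega)
    have hx' := h.ht_le_ht_smul i x
    have hy' := h.ht_le_ht_smul i y
    have sy_le := h.smul_le_self hy.le
    have of_le_sy (hle : le x (cs.simple i • y)) :
        ∃ z, le x z ∧ le z y ∧ ht x < ht z ∧ ht z < ht y :=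
      ⟨_, hle, sy_le, by omega, hy⟩
    rcases le_or_gt (ht x) (ht (cs.simple i • x)) with hx | hx
    · exact of_le_sy (h.le_smul_of_le hxy hx)
    have sx_le_sy : le (cs.simple i • x) (cs.simple i • y) :=
      h.le_smul_of_le (h.trans (h.smul_le_self hx.le) hxy) (by rw [simple_smul_smul]; exact hx.le)
    obtain ⟨z, sx_le_z, z_le_sy, hxz, hzy⟩ := ih _ hy sx_le_sy (by omega) rfl
    rcases le_or_gt (ht (cs.simple i • z)) (ht z) with hz | hz
    · have x_le_z : le x z := by simpa only [simple_smul_smul] using h.smul_le sx_le_z hz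
      exact of_le_sy (h.trans x_le_z z_le_sy)
    · have x_le_sz : le x (cs.simple i • z) := by
        simpa only [simple_smul_smul] using
          h.smul_le (i := i) (h.trans sx_le_z (h.le_smul hz.le))
            (by rw [simple_smul_smul]; exact hz.le)
      have sz_le_y : le (cs.simple i • z) y := h.smul_le (h.trans z_le_sy sy_le) hy.le
      have hz' := h.ht_smul_le i z
      exact ⟨_, x_le_sz, sz_le_y, by omega, by omega⟩

end HasLifting

end Lifting

section Cosets

variable (cs : CoxeterSystem M W) (H : Subgroup W)

/-- The cosets of `H` which meet the lower Bruhat interval of `w`. -/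
def lowerCosets (w : W) : Set (W ⧸ H) := (↑) '' {u : W | BruhatChain cs u w}

/-- The order on `W ⧸ H` in which `a ≤ b` iff every element of `b` dominates an element of `a`;
quantifying over all elements of `b` makes it transitive for every `H`. -/
def CosetLE (a b : W ⧸ H) : Prop := ∀ w : W, (w : W ⧸ H) = b → a ∈ lowerCosets cs H w

/-- The minimal length of an element of a coset. -/
noncomputable def cosetHeight (a : W ⧸ H) : ℕ := sInf (cs.length '' {w : W | (w : W ⧸ H) = a})

variable {cs H} {a b : W ⧸ H} {x y : W} {i j : B}

theorem mk_mem_lowerCosets (h : BruhatChain cs x y) : (x : W ⧸ H) ∈ lowerCosets cs H y :=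
  Set.mem_image_of_mem _ h

theorem lowerCosets_mono (h : BruhatChain cs x y) : lowerCosets cs H x ⊆ lowerCosets cs H y :=
  Set.image_mono fun _ hu => hu.trans h

theorem lowerCosets_mul_simple_subset (hi : cs.simple i ∈ H) :
    lowerCosets cs H (x * cs.simple i) ⊆ lowerCosets cs H x := by
  rintro _ ⟨u, hu, rfl⟩
  rcases hu.le_mul_simple_or_mul_simple_le_mul_simple i with h | h <;>
    rw [cs.simple_mul_simple_cancel_right] at h
  · exact mk_mem_lowerCosets h
  · rw [← QuotientGroup.mk_mul_of_mem u hi]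
    exact mk_mem_lowerCosets h

theorem lowerCosets_mul_simple_subset_union (hij : cs.simple i * cs.simple j ∈ H) :
    lowerCosets cs H (x * cs.simple i) ⊆
      lowerCosets cs H x ∪ lowerCosets cs H (x * cs.simple j) := by
  rintro _ ⟨u, hu, rfl⟩
  rcases hu.le_mul_simple_or_mul_simple_le_mul_simple i with h | h <;>
    rw [cs.simple_mul_simple_cancel_right] at h
  · exact Or.inl (mk_mem_lowerCosets h)
  · rw [← QuotientGroup.mk_mul_of_mem u hij, ← mul_assoc]
    exact (h.mul_simple_le_or_mul_simple_le_mul_simple j).imp mk_mem_lowerCosets mk_mem_lowerCosets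

theorem cosetHeight_mk_le (w : W) : cosetHeight cs H w ≤ cs.length w :=
  Nat.sInf_le ⟨w, rfl, rfl⟩

theorem exists_length_eq_cosetHeight (cs : CoxeterSystem M W) (a : W ⧸ H) :
    ∃ w : W, (w : W ⧸ H) = a ∧ cs.length w = cosetHeight cs H a := by
  obtain ⟨w, hw⟩ := QuotientGroup.mk_surjective a
  exact Nat.sInf_mem (s := cs.length '' {w | (w : W ⧸ H) = a}) ⟨_, w, hw, rfl⟩

theorem cosetHeight_simple_smul_le (i : B) (a : W ⧸ H) :
    cosetHeight cs H (cs.simple i • a) ≤ cosetHeight cs H a + 1 := by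
  obtain ⟨w, rfl, hw⟩ := exists_length_eq_cosetHeight cs a
  have height_le := cosetHeight_mk_le (cs := cs) (H := H) (cs.simple i * w)
  have length_le := cs.length_mul_le (cs.simple i) w
  rw [cs.length_simple] at length_le
  rw [MulAction.Quotient.smul_coe, smul_eq_mul]
  omega

theorem exists_cosetHeight_simple_smul_lt (a : W ⧸ H) (ha : cosetHeight cs H a ≠ 0) :
    ∃ i, cosetHeight cs H (cs.simple i • a) < cosetHeight cs H a := by
  obtain ⟨w, rfl, hw⟩ := exists_length_eq_cosetHeight cs a
  obtain ⟨i, hi⟩ := cs.exists_leftDescent_of_ne_one (w := w) (by rintro rfl; simp [← hw] at ha)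
  exact ⟨i, (cosetHeight_mk_le (cs.simple i * w)).trans_lt (hi.trans_eq hw)⟩

namespace CosetLE

theorem trans {c : W ⧸ H} (hab : CosetLE cs H a b) (hbc : CosetLE cs H b c) :
    CosetLE cs H a c := by
  intro w hw
  obtain ⟨v, hv, hvb⟩ := hbc w hw
  exact lowerCosets_mono hv (hab v hvb)

theorem cosetHeight_lt (hab : CosetLE cs H a b) (hne : a ≠ b) :
    cosetHeight cs H a < cosetHeight cs H b := by
  obtain ⟨w, rfl, hw⟩ := exists_length_eq_cosetHeight cs b
  obtain ⟨u, hu, rfl⟩ := hab w rfl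
  by_contra! hle
  rw [← hw] at hle
  exact hne (congrArg _ (hu.eq_of_length_le (hle.trans (cosetHeight_mk_le u))))

end CosetLE

end Cosets

namespace GoodSetup

variable {cs : CoxeterSystem M W} {I J K : Set B} {σ : W → W} {c x y z : W} {i : B}

section Subgroup

theorem map_one (h : GoodSetup cs I J K σ) : σ 1 = 1 := by
  simpa using h.mulSigma 1 (one_mem _) 1 (one_mem _)

theorem simple_ne_simple (h : GoodSetup cs I J K σ) {l : B} (hi : i ∈ I) (hl : l ∈ J ∪ K) :
    cs.simple i ≠ cs.simple l := by
  intro eq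
  have simple_eq_one : cs.simple i = 1 := by
    have hi' := simple_mem_parab (cs := cs) hi
    rcases hl with hl | hl
    · exact (h.directProd _ hi' _ (simple_mem_parab hl) 1 (one_mem _) (by simp [eq])).1
    · exact (h.directProd _ hi' 1 (one_mem _) _ (simple_mem_parab hl) (by simp [eq])).1
  simpa [simple_eq_one] using cs.length_simple i

theorem commute_simple (h : GoodSetup cs I J K σ) :
    ∀ i ∈ I, ∀ l ∈ J ∪ K, Commute (cs.simple i) (cs.simple l) :=
  fun i hi l hl => hl.elim (h.commIJ i hi l) (h.commIK i hi l)

theorem exists_map_simple_eq (h : GoodSetup cs I J K σ) {j : B} (hj : j ∈ J) :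
    ∃ i ∈ I, σ (cs.simple i) = cs.simple j := by
  set L : Set B := {l | ∃ i ∈ I, σ (cs.simple i) = cs.simple l}
  have map_mem {x : W} (hx : x ∈ parab cs I) : σ x ∈ parab cs L := by
    refine parab_induction_right (p := fun x => σ x ∈ parab cs L)
      (by rw [h.map_one]; exact one_mem _) (fun x hx i hi ih => ?_) hx
    obtain ⟨l, _, hl⟩ := h.simpleSigma i hi
    rw [h.mulSigma x hx _ (simple_mem_parab hi), hl]
    exact mul_mem ih (simple_mem_parab ⟨i, hi, hl⟩)
  obtain ⟨x, hx, hxj⟩ := h.bijSigma.surjOn (simple_mem_parab hj)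
  obtain ⟨l, ⟨i, hi, hil⟩, hjl⟩ := exists_simple_eq_of_simple_mem_parab (hxj ▸ map_mem hx)
  exact ⟨i, hi, hil.trans hjl.symm⟩

/-- The homomorphism `(x, a) ↦ a x x*` from `W_I × W_K` to `W`. -/
def twistedHom (h : GoodSetup cs I J K σ) : parab cs I × parab cs K →* W :=
  MonoidHom.mk' (fun p => p.2 * (p.1 * σ p.1)) fun p q => by
    have map_mem := h.bijSigma.mapsTo p.1.2
    have comm_K : Commute ((p.1 : W) * σ p.1) q.2 :=
      (commute_of_mem_parab h.commIK p.1.2 q.2.2).mul_left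
        (commute_of_mem_parab h.commJK map_mem q.2.2)
    have comm_IJ : Commute (σ p.1) (q.1 : W) := (commute_of_mem_parab h.commIJ q.1.2 map_mem).symm
    simp only [Prod.fst_mul, Prod.snd_mul, Subgroup.coe_mul, h.mulSigma _ p.1.2 _ q.1.2]
    rw [comm_K.mul_mul_mul_comm, comm_IJ.mul_mul_mul_comm]

/-- The subgroup `W_K W_{I,J}` of `W`, whose left cosets are the sets `[w]`. -/
def twistedSubgroup (h : GoodSetup cs I J K σ) : Subgroup W := h.twistedHom.range

theorem mem_twistedSubgroup (h : GoodSetup cs I J K σ) {g : W} :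
    g ∈ h.twistedSubgroup ↔ ∃ a ∈ parab cs K, ∃ x ∈ parab cs I, a * (x * σ x) = g :=
  ⟨fun ⟨⟨⟨x, hx⟩, ⟨a, ha⟩⟩, hg⟩ => ⟨a, ha, x, hx, hg⟩,
    fun ⟨a, ha, x, hx, hg⟩ => ⟨⟨⟨x, hx⟩, ⟨a, ha⟩⟩, hg⟩⟩

theorem inCoset_iff_mk_eq (h : GoodSetup cs I J K σ) :
    inCoset cs I K σ x y ↔ (x : W ⧸ h.twistedSubgroup) = y := by
  rw [QuotientGroup.eq, mem_twistedSubgroup]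
  simp only [inCoset, eq_inv_mul_iff_mul_eq, mul_assoc, eq_comm]

theorem simple_mem_twistedSubgroup (h : GoodSetup cs I J K σ) (hi : i ∈ K) :
    cs.simple i ∈ h.twistedSubgroup :=
  h.mem_twistedSubgroup.2 ⟨_, simple_mem_parab hi, 1, one_mem _, by simp [h.map_one]⟩

theorem simple_mul_simple_mem_twistedSubgroup (h : GoodSetup cs I J K σ) {j : B} (hi : i ∈ I)
    (hij : σ (cs.simple i) = cs.simple j) : cs.simple i * cs.simple j ∈ h.twistedSubgroup :=
  h.mem_twistedSubgroup.2 ⟨1, one_mem _, _, simple_mem_parab hi, by rw [one_mul, hij]⟩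

theorem simple_mul_simple_mem_twistedSubgroup' (h : GoodSetup cs I J K σ) {j : B} (hi : i ∈ I)
    (hij : σ (cs.simple i) = cs.simple j) : cs.simple j * cs.simple i ∈ h.twistedSubgroup := by
  simpa using inv_mem (h.simple_mul_simple_mem_twistedSubgroup hi hij)

end Subgroup

section Representatives

theorem mul_mem_minReps (h : GoodSetup cs I J K σ) (hc : c ∈ minReps cs (J ∪ K))
    (hx : x ∈ parab cs I) : c * x ∈ minReps cs (J ∪ K) := by
  refine parab_induction_right (p := fun x => c * x ∈ minReps cs (J ∪ K)) (by rwa [mul_one])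
    (fun x _ i hi ih => ?_) hx
  rw [← mul_assoc]
  exact mul_simple_mem_minReps ih (h.commute_simple i hi) fun l => h.simple_ne_simple hi

theorem eq_of_mem_minReps_of_mk_eq (h : GoodSetup cs I J K σ) (hx : x ∈ minReps cs (J ∪ K))
    (hy : y ∈ minReps cs (J ∪ K)) (hxy : (x : W ⧸ h.twistedSubgroup) = y) : x = y := by
  obtain ⟨a, ha, p, hp, rfl⟩ := h.inCoset_iff_mk_eq.2 hxy
  have hσp := h.bijSigma.mapsTo hp
  have rearrange : x * a * (p * σ p) = x * p * (σ p * a) := by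
    rw [(commute_of_mem_parab h.commJK hσp ha).eq]
    simp only [mul_assoc, (commute_of_mem_parab h.commIK hp ha).left_comm]
  rw [rearrange] at hy ⊢
  have mul_eq_one : σ p * a = 1 :=
    eq_one_of_mul_mem_minReps (h.mul_mem_minReps hx hp)
      (mul_mem (parab_mono Set.subset_union_left hσp) (parab_mono Set.subset_union_right ha)) hy
  have map_eq_one : σ p = 1 :=
    (h.directProd 1 (one_mem _) _ hσp _ ha (by rwa [one_mul])).2.1
  have p_eq_one : p = 1 := h.bijSigma.injOn hp (one_mem _) (map_eq_one.trans h.map_one.symm)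
  rw [mul_eq_one, p_eq_one, mul_one, mul_one]

theorem exists_lowerCosets_subset_of_descent (h : GoodSetup cs I J K σ) {l : B} (hl : l ∈ J ∪ K)
    (hlt : cs.length (y * cs.simple l) < cs.length y) :
    ∃ x ∈ parab cs I, (↑(y * cs.simple l * x) : W ⧸ h.twistedSubgroup) = y ∧
      lowerCosets cs h.twistedSubgroup (y * cs.simple l * x) ⊆
        lowerCosets cs h.twistedSubgroup y ∧
      cs.length (y * cs.simple l * x) ≤ cs.length y := by
  have below : lowerCosets cs h.twistedSubgroup (y * cs.simple l) ⊆
      lowerCosets cs h.twistedSubgroup y := lowerCosets_mono (BruhatChain.mul_simple_le hlt)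
  rcases hl with hl | hl
  · obtain ⟨i, hi, hil⟩ := h.exists_map_simple_eq hl
    refine ⟨cs.simple i, simple_mem_parab hi, ?_, ?_, ?_⟩
    · rw [mul_assoc]
      exact QuotientGroup.mk_mul_of_mem y (h.simple_mul_simple_mem_twistedSubgroup' hi hil)
    · refine (lowerCosets_mul_simple_subset_union
        (h.simple_mul_simple_mem_twistedSubgroup hi hil)).trans (Set.union_subset below ?_)
      rw [cs.simple_mul_simple_cancel_right]
    · have length_step := cs.length_mul_simple (y * cs.simple l) i
      omega
  · refine ⟨1, one_mem _, ?_, ?_, ?_⟩ <;> rw [mul_one]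
    · exact QuotientGroup.mk_mul_of_mem y (h.simple_mem_twistedSubgroup hl)
    · exact below
    · exact hlt.le

theorem exists_minRep_lowerCosets_subset (h : GoodSetup cs I J K σ) (y : W) :
    ∃ c ∈ minReps cs (J ∪ K), (c : W ⧸ h.twistedSubgroup) = y ∧
      lowerCosets cs h.twistedSubgroup c ⊆ lowerCosets cs h.twistedSubgroup y ∧
      cs.length c ≤ cs.length y := by
  obtain ⟨c, hc, z, hz, rfl, -⟩ := exists_eq_mul_mem_minReps cs (J ∪ K) y
  induction hn : cs.length z using Nat.strong_induction_on generalizing c z with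
  | _ n ih =>
    by_cases hcz : c * z ∈ minReps cs (J ∪ K)
    · exact ⟨_, hcz, rfl, subset_rfl, le_rfl⟩
    obtain ⟨l, hl, hle⟩ : ∃ l ∈ J ∪ K, cs.length (c * z * cs.simple l) ≤ cs.length (c * z) := by
      simpa [minReps] using hcz
    have hlt := lt_of_le_of_ne hle (cs.length_mul_simple_ne _ l)
    have hzl := mul_mem hz (simple_mem_parab (cs := cs) hl)
    have hlt_z : cs.length (z * cs.simple l) < n := by
      rw [mul_assoc, length_mul_of_mem_minReps hc hzl, length_mul_of_mem_minReps hc hz] at hlt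
      omega
    obtain ⟨x, hx, mk_eq, sub, len⟩ := h.exists_lowerCosets_subset_of_descent hl hlt
    have move_x : c * z * cs.simple l * x = c * x * (z * cs.simple l) := by
      rw [mul_assoc c z, mul_assoc c, mul_assoc c,
        (commute_of_mem_parab h.commute_simple hx hzl).eq]
    rw [move_x] at mk_eq sub len
    obtain ⟨c', hc', mk_eq', sub', len'⟩ :=
      ih _ hlt_z (c * x) (h.mul_mem_minReps hc hx) (z * cs.simple l) hzl rfl
    exact ⟨c', hc', mk_eq'.trans mk_eq, sub'.trans sub, len'.trans len⟩

theorem exists_minRep_mk_eq (h : GoodSetup cs I J K σ) (a : W ⧸ h.twistedSubgroup) :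
    ∃ c ∈ minReps cs (J ∪ K), (c : W ⧸ h.twistedSubgroup) = a := by
  obtain ⟨y, rfl⟩ := QuotientGroup.mk_surjective a
  obtain ⟨c, hc, mk_eq, -⟩ := h.exists_minRep_lowerCosets_subset y
  exact ⟨c, hc, mk_eq⟩

theorem cosetHeight_mk (h : GoodSetup cs I J K σ) (hc : c ∈ minReps cs (J ∪ K)) :
    cosetHeight cs h.twistedSubgroup c = cs.length c := by
  refine le_antisymm (cosetHeight_mk_le c) ?_
  obtain ⟨y, hy, length_eq⟩ := exists_length_eq_cosetHeight cs (c : W ⧸ h.twistedSubgroup)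
  obtain ⟨c', hc', mk_eq, -, len⟩ := h.exists_minRep_lowerCosets_subset y
  rw [← length_eq, ← h.eq_of_mem_minReps_of_mk_eq hc' hc (mk_eq.trans hy)]
  exact len

theorem cosetLE_mk_iff (h : GoodSetup cs I J K σ) (hc : c ∈ minReps cs (J ∪ K))
    {a : W ⧸ h.twistedSubgroup} :
    CosetLE cs h.twistedSubgroup a c ↔ a ∈ lowerCosets cs h.twistedSubgroup c := by
  refine ⟨fun hle => hle c rfl, fun ha y hy => ?_⟩
  obtain ⟨c', hc', mk_eq, sub, -⟩ := h.exists_minRep_lowerCosets_subset y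
  rw [h.eq_of_mem_minReps_of_mk_eq hc' hc (mk_eq.trans hy)] at sub
  exact sub ha

theorem leO_iff_cosetLE (h : GoodSetup cs I J K σ) (hc : c ∈ minReps cs (J ∪ K)) :
    leO cs I K σ x c ↔ CosetLE cs h.twistedSubgroup x c := by
  simp only [h.cosetLE_mk_iff hc, leO, h.inCoset_iff_mk_eq, bruhatLE_iff_bruhatChain, lowerCosets,
    Set.mem_image, Set.mem_ofPred_eq, and_comm, eq_comm]

end Representatives

section Order

theorem lowerCosets_simple_mul_subset (h : GoodSetup cs I J K σ) (hc : c ∈ minReps cs (J ∪ K))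
    (hle : cosetHeight cs h.twistedSubgroup (cs.simple i • (c : W ⧸ h.twistedSubgroup)) ≤
      cosetHeight cs h.twistedSubgroup c) :
    lowerCosets cs h.twistedSubgroup (cs.simple i * c) ⊆ lowerCosets cs h.twistedSubgroup c := by
  rw [MulAction.Quotient.smul_coe, smul_eq_mul, h.cosetHeight_mk hc] at hle
  rcases simple_mul_mem_minReps_or hc i with hic | ⟨l, hl | hl, hcl⟩
  · rw [h.cosetHeight_mk hic] at hle
    exact lowerCosets_mono (BruhatChain.simple_mul_le
      (lt_of_le_of_ne hle (cs.length_simple_mul_ne c i)))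
  · obtain ⟨k, hk, hkl⟩ := h.exists_map_simple_eq hl
    have mk_eq : (↑(c * cs.simple k) : W ⧸ h.twistedSubgroup) = ↑(cs.simple i * c) := by
      rw [hcl, QuotientGroup.eq]
      simpa [mul_assoc] using h.simple_mul_simple_mem_twistedSubgroup hk hkl
    rw [← mk_eq, h.cosetHeight_mk (h.mul_mem_minReps hc (simple_mem_parab hk))] at hle
    rw [hcl]
    exact (lowerCosets_mul_simple_subset_union
      (h.simple_mul_simple_mem_twistedSubgroup' hk hkl)).trans (Set.union_subset subset_rfl
        (lowerCosets_mono (BruhatChain.mul_simple_le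
          (lt_of_le_of_ne hle (cs.length_mul_simple_ne c k)))))
  · rw [hcl]
    exact lowerCosets_mul_simple_subset (h.simple_mem_twistedSubgroup hl)

theorem cosetLE_simple_smul (h : GoodSetup cs I J K σ) {a : W ⧸ h.twistedSubgroup}
    (hle : cosetHeight cs h.twistedSubgroup a ≤
      cosetHeight cs h.twistedSubgroup (cs.simple i • a)) :
    CosetLE cs h.twistedSubgroup a (cs.simple i • a) := by
  obtain ⟨c, hc, mk_eq⟩ := h.exists_minRep_mk_eq (cs.simple i • a)
  have a_eq : a = ↑(cs.simple i * c) := by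
    rw [← smul_eq_mul, ← MulAction.Quotient.smul_coe, mk_eq, HasLifting.simple_smul_smul]
  rw [← mk_eq, h.cosetLE_mk_iff hc]
  refine h.lowerCosets_simple_mul_subset (i := i) hc ?_ ?_
  · rwa [mk_eq, HasLifting.simple_smul_smul]
  · rw [a_eq]
    exact mk_mem_lowerCosets Relation.ReflTransGen.refl

theorem cosetLE_simple_smul_or (h : GoodSetup cs I J K σ) (i : B) {a b : W ⧸ h.twistedSubgroup}
    (hab : CosetLE cs h.twistedSubgroup a b) :
    CosetLE cs h.twistedSubgroup a (cs.simple i • b) ∨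
      CosetLE cs h.twistedSubgroup (cs.simple i • a) (cs.simple i • b) := by
  obtain ⟨c, hc, mk_eq⟩ := h.exists_minRep_mk_eq (cs.simple i • b)
  have mk_simple_mul : (↑(cs.simple i * c) : W ⧸ h.twistedSubgroup) = b := by
    rw [← smul_eq_mul, ← MulAction.Quotient.smul_coe, mk_eq, HasLifting.simple_smul_smul]
  obtain ⟨u, hu, rfl⟩ := hab _ mk_simple_mul
  rw [← mk_eq, h.cosetLE_mk_iff hc, h.cosetLE_mk_iff hc]
  have lift := BruhatChain.le_simple_mul_or_simple_mul_le_simple_mul hu i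
  rw [cs.simple_mul_simple_cancel_left] at lift
  exact lift.imp mk_mem_lowerCosets mk_mem_lowerCosets

theorem simple_smul_cosetLE (h : GoodSetup cs I J K σ) {a b : W ⧸ h.twistedSubgroup}
    (hab : CosetLE cs h.twistedSubgroup a b)
    (hle : cosetHeight cs h.twistedSubgroup (cs.simple i • b) ≤
      cosetHeight cs h.twistedSubgroup b) :
    CosetLE cs h.twistedSubgroup (cs.simple i • a) b := by
  obtain ⟨c, hc, rfl⟩ := h.exists_minRep_mk_eq b
  obtain ⟨u, hu, rfl⟩ := hab c rfl
  rw [h.cosetLE_mk_iff hc]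
  rcases BruhatChain.simple_mul_le_or_simple_mul_le_simple_mul hu i with hle' | hle'
  · exact mk_mem_lowerCosets hle'
  · exact h.lowerCosets_simple_mul_subset hc hle (mk_mem_lowerCosets hle')

theorem hasLifting (h : GoodSetup cs I J K σ) :
    HasLifting cs (CosetLE cs h.twistedSubgroup) (cosetHeight cs h.twistedSubgroup) where
  trans := CosetLE.trans
  ht_smul_le := cosetHeight_simple_smul_le
  exists_ht_smul_lt := exists_cosetHeight_simple_smul_lt
  le_smul := h.cosetLE_simple_smul
  le_smul_or := h.cosetLE_simple_smul_or
  smul_le := h.simple_smul_cosetLE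

end Order

end GoodSetup

theorem statement_12 (cs : CoxeterSystem M W) (I J K : Set B) (σ : W → W)
    (h : GoodSetup cs I J K σ) (w w' : W)
    (hw : w ∈ minReps cs (J ∪ K)) (hw' : w' ∈ minReps cs (J ∪ K))
    (hlt : ltO cs I K σ w' w)
    (hcov : ∀ z ∈ minReps cs (J ∪ K), ltO cs I K σ w' z → ltO cs I K σ z w → False) :
    cs.length w' + 1 = cs.length w := by
  have height_eq {c : W} := h.cosetHeight_mk (c := c)
  have hle := (h.leO_iff_cosetLE hw).1 hlt.1
  have hne : (w' : W ⧸ h.twistedSubgroup) ≠ w :=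
    fun mk_eq => hlt.2 (h.eq_of_mem_minReps_of_mk_eq hw' hw mk_eq)
  have length_lt := hle.cosetHeight_lt hne
  rw [height_eq hw, height_eq hw'] at length_lt
  by_contra hcon
  obtain ⟨a, hw'a, haw, lt_a, a_lt⟩ :=
    h.hasLifting.exists_between hle (by rw [height_eq hw, height_eq hw']; omega)
  obtain ⟨z, hz, rfl⟩ := h.exists_minRep_mk_eq a
  exact hcov z hz ⟨(h.leO_iff_cosetLE hz).2 hw'a, by rintro rfl; exact lt_irrefl _ lt_a⟩
    ⟨(h.leO_iff_cosetLE hw).2 haw, by rintro rfl; exact lt_irrefl _ a_lt⟩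

end BruhatSetup
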